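/- Let Xᵢ, X_{−i}, R_{−i}, M, Z, Π be discrete random variables with finite range on a common probability space, and write X = (Xᵢ, X_{−i}). Assume: (a) I(Xᵢ; (X_{−i}, R_{−i}) | M, Z) = 0 (Xᵢ is conditionally independent of (X_{−i}, R_{−i}) given (M, Z)); and (b) I(Π; (M, Z) | X, R_{−i}) = 0. Then I(Xᵢ; Π | M, Z) ≤ I(Xᵢ; Π | X_{−i}, R_{−i}). -/

import Mathlib

open Finset

noncomputable section

open Classical in
/-- Probability of an event under a probability mass function on a finite sample space. -/
def pr {Ω : Type*} [Fintype Ω] (p : Ω → ℝ) (E : Ω → Prop) : ℝ :=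
  ∑ ω ∈ Finset.univ.filter E, p ω

open Classical in
/-- Shannon entropy (in bits) of a discrete random variable on a finite sample space. -/
def entropy {Ω A : Type*} [Fintype Ω] (p : Ω → ℝ) (X : Ω → A) : ℝ :=
  -∑ a ∈ Finset.univ.image X,
    pr p (fun ω => X ω = a) * Real.logb 2 (pr p (fun ω => X ω = a))

open Classical in
/-- Conditional entropy `H(X | Y) = ∑_y Pr[Y=y] · H(X | Y=y)` (in bits). -/
def condEntropy {Ω A B : Type*} [Fintype Ω] (p : Ω → ℝ) (X : Ω → A) (Y : Ω → B) : ℝ :=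
  ∑ b ∈ Finset.univ.image Y,
    pr p (fun ω => Y ω = b) *
      (-∑ a ∈ Finset.univ.image X,
        (pr p (fun ω => X ω = a ∧ Y ω = b) / pr p (fun ω => Y ω = b)) *
          Real.logb 2
            (pr p (fun ω => X ω = a ∧ Y ω = b) / pr p (fun ω => Y ω = b)))

/-- Conditional mutual information `I(X;Y | Z) = H(X|Z) − H(X|Y,Z)` (in bits). -/
def condMutualInfo {Ω A B C : Type*} [Fintype Ω] (p : Ω → ℝ)
    (X : Ω → A) (Y : Ω → B) (Z : Ω → C) : ℝ :=
  condEntropy p X Z - condEntropy p X (fun ω => (Y ω, Z ω))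

theorem pr_eq {Ω : Type*} [Fintype Ω] (p : Ω → ℝ) (E : Ω → Prop) [DecidablePred E] :
    pr p E = ∑ ω, if E ω then p ω else 0 := by
  unfold pr
  rw [Finset.sum_filter]
  congr!

theorem pr_mono {Ω : Type*} [Fintype Ω] (p : Ω → ℝ) (hp : ∀ ω, 0 ≤ p ω) (E F : Ω → Prop)
    (h : ∀ ω, E ω → F ω) : pr p E ≤ pr p F := by
  classical
  rw [pr_eq, pr_eq]
  refine Finset.sum_le_sum fun ω _ => ?_
  have := hp ω
  have := h ω
  split_ifs <;> first | exact le_rfl | assumption | tauto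

theorem pr_nonneg {Ω : Type*} [Fintype Ω] (p : Ω → ℝ) (hp : ∀ ω, 0 ≤ p ω) (E : Ω → Prop) :
    0 ≤ pr p E := Finset.sum_nonneg fun ω _ => hp ω

/-- probability of the fibre of `f` through `ω` -/
def fib {Ω A : Type*} [Fintype Ω] (p : Ω → ℝ) (f : Ω → A) (ω : Ω) : ℝ :=
  pr p (fun ω' => f ω' = f ω)

theorem fib_ge {Ω A : Type*} [Fintype Ω] (p : Ω → ℝ) (hp : ∀ ω, 0 ≤ p ω) (f : Ω → A) (ω : Ω) :
    p ω ≤ fib p f ω := by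
  classical
  unfold fib pr
  exact Finset.single_le_sum (f := p) (fun i _ => hp i) (by simp)

/-- minus the entropy -/
def ne {Ω A : Type*} [Fintype Ω] (p : Ω → ℝ) (f : Ω → A) : ℝ :=
  ∑ ω, p ω * Real.logb 2 (fib p f ω)

theorem ne_congr {Ω A B : Type*} [Fintype Ω] (p : Ω → ℝ) (f : Ω → A) (g : Ω → B)
    (h : ∀ ω ω', f ω = f ω' ↔ g ω = g ω') : ne p f = ne p g := by
  unfold ne fib
  simp only [h]

theorem condEntropy_eq {Ω A B : Type*} [Fintype Ω] (p : Ω → ℝ) (hp : ∀ ω, 0 ≤ p ω)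
    (X : Ω → A) (Y : Ω → B) :
    condEntropy p X Y = ne p Y - ne p (fun ω => (X ω, Y ω)) := by
  classical
  have h1 : condEntropy p X Y = ∑ b ∈ Finset.univ.image Y, ∑ a ∈ Finset.univ.image X,
      ∑ ω, if Y ω = b then (if X ω = a then -(p ω * Real.logb 2
        (pr p (fun ω => X ω = a ∧ Y ω = b) / pr p (fun ω => Y ω = b))) else 0) else 0 := by
    unfold condEntropy
    refine Finset.sum_congr (by congr!) fun b _ => ?_
    rw [← Finset.sum_neg_distrib, Finset.mul_sum]
    refine Finset.sum_congr (by congr!) fun a _ => ?_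
    have h2 : pr p (fun ω => Y ω = b) * (pr p (fun ω => X ω = a ∧ Y ω = b) /
        pr p (fun ω => Y ω = b)) = pr p (fun ω => X ω = a ∧ Y ω = b) := by
      by_cases h0 : pr p (fun ω => Y ω = b) = 0
      · have := pr_mono p hp (fun ω => X ω = a ∧ Y ω = b) (fun ω => Y ω = b) (fun ω h => h.2)
        have := pr_nonneg p hp (fun ω => X ω = a ∧ Y ω = b)
        rw [h0]; linarith
      · field_simp
    rw [mul_neg, ← mul_assoc, h2]
    generalize Real.logb 2 _ = l
    rw [pr_eq, Finset.sum_mul, ← Finset.sum_neg_distrib]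
    refine Finset.sum_congr rfl fun ω _ => ?_
    by_cases hx : X ω = a <;> by_cases hy : Y ω = b <;> simp [hx, hy]
  have h3 : condEntropy p X Y = ∑ ω, -(p ω * Real.logb 2
        (fib p (fun ω => (X ω, Y ω)) ω / fib p Y ω)) := by
    rw [h1]
    simp_rw [Finset.sum_comm (s := Finset.univ.image X)]
    rw [Finset.sum_comm]
    refine Finset.sum_congr rfl fun ω _ => ?_
    rw [Finset.sum_eq_single (Y ω), Finset.sum_eq_single (X ω)]
    · simp [fib]
    · intro a _ h; simp [Ne.symm h]
    · intro h; simp at h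
    · intro a _ h; simp [Ne.symm h]
    · intro h; simp at h
  rw [h3]
  unfold ne
  rw [← Finset.sum_sub_distrib]
  refine Finset.sum_congr rfl fun ω _ => ?_
  rcases (hp ω).eq_or_lt with h | h
  · simp [← h]
  · rw [Real.logb_div]
    · ring
    · exact (h.trans_le (fib_ge p hp _ ω)).ne'
    · exact (h.trans_le (fib_ge p hp _ ω)).ne'

theorem key_sum {Ω A B C : Type*} [Fintype Ω] (p : Ω → ℝ) (hp : ∀ ω, 0 ≤ p ω)
    (a : Ω → A) (b : Ω → B) (c : Ω → C) :
    ∑ ω, p ω * (fib p (fun ω => (a ω, c ω)) ω * fib p (fun ω => (b ω, c ω)) ω /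
      (fib p (fun ω => (a ω, b ω, c ω)) ω * fib p c ω)) ≤ ∑ ω, p ω := by
  classical
  have fn : ∀ {D : Type _} (f : Ω → D) (ω : Ω), 0 ≤ fib p f ω := fun f ω => pr_nonneg p hp _
  have e1 : ∀ ω, p ω * (fib p (fun ω => (a ω, c ω)) ω * fib p (fun ω => (b ω, c ω)) ω /
      (fib p (fun ω => (a ω, b ω, c ω)) ω * fib p c ω)) =
      ∑ x, ∑ y, if (a x = a ω ∧ c x = c ω) ∧ (b y = b ω ∧ c y = c ω) then
        p x * p y / fib p c x * (p ω / fib p (fun ω => (a ω, b ω, c ω)) ω) else 0 := by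
    intro ω
    have h1 : fib p (fun ω => (a ω, c ω)) ω = ∑ x, if a x = a ω ∧ c x = c ω then p x else 0 := by
      simp [fib, pr_eq]
    have h2 : fib p (fun ω => (b ω, c ω)) ω = ∑ x, if b x = b ω ∧ c x = c ω then p x else 0 := by
      simp [fib, pr_eq]
    rw [h1, h2, Finset.sum_mul_sum, Finset.sum_div, Finset.mul_sum]
    refine Finset.sum_congr rfl fun x _ => ?_
    rw [Finset.sum_div, Finset.mul_sum]
    refine Finset.sum_congr rfl fun y _ => ?_
    by_cases hx : a x = a ω ∧ c x = c ω
    · by_cases hy : b y = b ω ∧ c y = c ω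
      · have : fib p c x = fib p c ω := by unfold fib; rw [hx.2]
        rw [if_pos hx, if_pos hy, if_pos ⟨hx, hy⟩, this]
        simp only [div_eq_mul_inv, mul_inv]; ring
      · simp [hy]
    · simp [hx]
  simp_rw [e1]
  rw [Finset.sum_comm]
  refine Finset.sum_le_sum fun x _ => ?_
  rw [Finset.sum_comm]
  have e2 : ∀ y, (∑ ω, if (a x = a ω ∧ c x = c ω) ∧ (b y = b ω ∧ c y = c ω) then
        p x * p y / fib p c x * (p ω / fib p (fun ω => (a ω, b ω, c ω)) ω) else 0) ≤
        p x / fib p c x * (if c y = c x then p y else 0) := by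
    intro y
    by_cases hc : c y = c x
    · rw [if_pos hc]
      have e3 : ∀ ω, (if (a x = a ω ∧ c x = c ω) ∧ (b y = b ω ∧ c y = c ω) then
        p x * p y / fib p c x * (p ω / fib p (fun ω => (a ω, b ω, c ω)) ω) else 0) =
        p x / fib p c x * p y * ((if (a ω = a x ∧ b ω = b y ∧ c ω = c x) then p ω else 0) /
          pr p (fun ω => a ω = a x ∧ b ω = b y ∧ c ω = c x)) := by
        intro ω
        by_cases h : a ω = a x ∧ b ω = b y ∧ c ω = c x
        · obtain ⟨h1, h2, h3⟩ := h
          simp [fib, h1, h2, h3, hc]; left; ring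
        · rw [if_neg h, if_neg]
          · simp
          · rintro ⟨⟨h1, h2⟩, h3, h4⟩
            exact h ⟨h1.symm, h3.symm, h2.symm⟩
      simp_rw [e3]
      rw [← Finset.mul_sum, ← Finset.sum_div, ← pr_eq]
      exact mul_le_of_le_one_right (mul_nonneg (div_nonneg (hp x) (fn c x)) (hp y))
        (div_self_le_one _)
    · rw [if_neg hc, mul_zero]
      refine (Finset.sum_eq_zero fun ω _ => if_neg ?_).le
      rintro ⟨⟨h1, h2⟩, h3, h4⟩
      exact hc (h4.trans h2.symm)
  refine (Finset.sum_le_sum fun y _ => e2 y).trans ?_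
  rw [← Finset.mul_sum, ← pr_eq]
  change p x / fib p c x * fib p c x ≤ p x
  rcases (fn c x).eq_or_lt with h | h
  · rw [← h]; simpa using hp x
  · rw [div_mul_cancel₀ _ h.ne']

theorem submod {Ω A B C : Type*} [Fintype Ω] (p : Ω → ℝ) (hp : ∀ ω, 0 ≤ p ω)
    (a : Ω → A) (b : Ω → B) (c : Ω → C) :
    ne p (fun ω => (a ω, c ω)) + ne p (fun ω => (b ω, c ω)) ≤
      ne p (fun ω => (a ω, b ω, c ω)) + ne p c := by
  have l2 : 0 < Real.log 2 := Real.log_pos (by norm_num)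
  have key := key_sum p hp a b c
  have : ∑ ω, p ω * (Real.logb 2 (fib p (fun ω => (a ω, c ω)) ω)
      + Real.logb 2 (fib p (fun ω => (b ω, c ω)) ω)
      - Real.logb 2 (fib p (fun ω => (a ω, b ω, c ω)) ω) - Real.logb 2 (fib p c ω)) ≤
      ∑ ω, (p ω * (fib p (fun ω => (a ω, c ω)) ω * fib p (fun ω => (b ω, c ω)) ω /
      (fib p (fun ω => (a ω, b ω, c ω)) ω * fib p c ω)) - p ω) / Real.log 2 := by
    refine Finset.sum_le_sum fun ω _ => ?_
    rcases (hp ω).eq_or_lt with h | h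
    · simp [← h]
    · have h1 := h.trans_le (fib_ge p hp (fun ω => (a ω, c ω)) ω)
      have h2 := h.trans_le (fib_ge p hp (fun ω => (b ω, c ω)) ω)
      have h3 := h.trans_le (fib_ge p hp (fun ω => (a ω, b ω, c ω)) ω)
      have h4 := h.trans_le (fib_ge p hp c ω)
      have h5 := Real.log_le_sub_one_of_pos (div_pos (mul_pos h1 h2) (mul_pos h3 h4))
      rw [Real.log_div (mul_pos h1 h2).ne' (mul_pos h3 h4).ne', Real.log_mul h1.ne' h2.ne',
        Real.log_mul h3.ne' h4.ne'] at h5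
      rw [le_div_iff₀ l2]
      have h6 := mul_le_mul_of_nonneg_left h5 h.le
      simp only [Real.logb]
      field_simp at h6 ⊢
      linarith
  rw [← Finset.sum_div, Finset.sum_sub_distrib] at this
  have h7 : ((∑ ω, p ω * (fib p (fun ω => (a ω, c ω)) ω * fib p (fun ω => (b ω, c ω)) ω /
      (fib p (fun ω => (a ω, b ω, c ω)) ω * fib p c ω))) - ∑ ω, p ω) / Real.log 2 ≤ 0 :=
    div_nonpos_of_nonpos_of_nonneg (by linarith) l2.le
  have h8 := this.trans h7
  simp only [mul_sub, mul_add, Finset.sum_sub_distrib, Finset.sum_add_distrib] at h8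
  unfold ne
  linarith

/-- Second half of `SMIC ≤ MIC`: if `Xᵢ` is conditionally independent of
`(X₋ᵢ, R₋ᵢ)` given `(M, Z)`, and `I(Tr; (M,Z) | X R₋ᵢ) = 0` where
`X = (Xᵢ, X₋ᵢ)`, then `I(Xᵢ; Tr | M Z) ≤ I(Xᵢ; Tr | X₋ᵢ R₋ᵢ)`. -/
theorem smic_le_mic_second_half {Ω α α' β' γ δ ε' : Type*} [Fintype Ω]
    (p : Ω → ℝ) (hp : ∀ ω, 0 ≤ p ω) (hsum : ∑ ω, p ω = 1)
    (Xi : Ω → α) (Xmi : Ω → α') (Rmi : Ω → β')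
    (M : Ω → γ) (Z : Ω → δ) (Tr : Ω → ε')
    (ha : condMutualInfo p Xi (fun ω => (Xmi ω, Rmi ω)) (fun ω => (M ω, Z ω)) = 0)
    (hb : condMutualInfo p Tr (fun ω => (M ω, Z ω))
        (fun ω => ((Xi ω, Xmi ω), Rmi ω)) = 0) :
    condMutualInfo p Xi Tr (fun ω => (M ω, Z ω)) ≤
      condMutualInfo p Xi Tr (fun ω => (Xmi ω, Rmi ω)) := by
  simp only [condMutualInfo, condEntropy_eq p hp] at ha hb ⊢
  have s1 := submod p hp Xi (fun ω => (Xmi ω, Rmi ω)) (fun ω => (Tr ω, M ω, Z ω))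
  have s2 := submod p hp Tr (fun ω => (M ω, Z ω)) (fun ω => (Xmi ω, Rmi ω))
  have c1 := ne_congr p (fun ω => (Xi ω, (Xmi ω, Rmi ω), M ω, Z ω))
    (fun ω => ((M ω, Z ω), (Xi ω, Xmi ω), Rmi ω)) (by intros; simp only [Prod.mk.injEq]; tauto)
  have c2 := ne_congr p (fun ω => (Xi ω, (Xmi ω, Rmi ω), Tr ω, M ω, Z ω))
    (fun ω => (Tr ω, (M ω, Z ω), (Xi ω, Xmi ω), Rmi ω))
    (by intros; simp only [Prod.mk.injEq]; tauto)
  have c3 := ne_congr p (fun ω => ((Xmi ω, Rmi ω), Tr ω, M ω, Z ω))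
    (fun ω => (Tr ω, (M ω, Z ω), Xmi ω, Rmi ω)) (by intros; simp only [Prod.mk.injEq]; tauto)
  have c4 := ne_congr p (fun ω => ((Xmi ω, Rmi ω), M ω, Z ω))
    (fun ω => ((M ω, Z ω), Xmi ω, Rmi ω)) (by intros; simp only [Prod.mk.injEq]; tauto)
  have c5 := ne_congr p (fun ω => ((Xi ω, Xmi ω), Rmi ω))
    (fun ω => (Xi ω, Xmi ω, Rmi ω)) (by intros; simp only [Prod.mk.injEq]; tauto)
  have c6 := ne_congr p (fun ω => (Tr ω, (Xi ω, Xmi ω), Rmi ω))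
    (fun ω => (Xi ω, Tr ω, Xmi ω, Rmi ω)) (by intros; simp only [Prod.mk.injEq]; tauto)
  linarith
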